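/- arXiv:2310.06270 — 2 statements merged into one kernel-verified Lean document; each statement's English description precedes it below -/
import Mathlib

section
/- Let ε > 0, ν > 0, and let T > 1 be real (so 0 < log T < T). If p is a real number with 0 < p ≤ (1/2)·( (ε² − ν) + √( (ε² − ν)² + 4νε²(1 + log(T / log T)) ) ), then p · ((log T)/T)^{ν/(ν+p)} ≤ ε², i.e., √( p · ((log T)/T)^{ν/(ν+p)} ) ≤ ε. -/
/-!
Write `L = log (T / log T) > 0` and `a = ν / (ν + p)`. Since `p` lies between the two roots of the
quadratic, `p (ν + p) ≤ ε² (ν + p + ν L)`, that is, `p ≤ ε² (1 + a L)`. By `1 + x ≤ exp x` this gives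
`p ≤ ε² exp (a L)`, and `((log T) / T) ^ a = exp (-a L)`.
-/

/-- If `0 < p` is at most the explicit root of the quadratic
`p² − (ε²−ν)p − νε²(1 + log(T/log T))`, then `p·((log T)/T)^{ν/(ν+p)} ≤ ε²`, i.e.,
`√(p·((log T)/T)^{ν/(ν+p)}) ≤ ε`. -/
theorem stmt_10 (ε ν T p : ℝ) (hε : 0 < ε) (hν : 0 < ν) (hT : 1 < T) (hp : 0 < p)
    (hple : p ≤ (1 / 2) * ((ε ^ 2 - ν) +
      Real.sqrt ((ε ^ 2 - ν) ^ 2 + 4 * ν * ε ^ 2 * (1 + Real.log (T / Real.log T))))) :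
    p * (Real.log T / T) ^ (ν / (ν + p)) ≤ ε ^ 2 ∧
      Real.sqrt (p * (Real.log T / T) ^ (ν / (ν + p))) ≤ ε := by
  have hlog : 0 < Real.log T := Real.log_pos hT
  have hlt : Real.log T < T := by linarith [Real.log_le_sub_one_of_pos (by linarith : 0 < T)]
  have hL : 0 < Real.log (T / Real.log T) := Real.log_pos ((one_lt_div hlog).2 hlt)
  have hlogL : Real.log (Real.log T / T) = -Real.log (T / Real.log T) := by
    rw [← Real.log_inv, inv_div]
  have hpow : (Real.log T / T) ^ (ν / (ν + p)) =
      Real.exp (-(Real.log (T / Real.log T) * (ν / (ν + p)))) := by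
    rw [Real.rpow_def_of_pos (by positivity), hlogL, neg_mul]
  rw [hpow]
  generalize Real.log (T / Real.log T) = L at *
  have hc : 0 < 4 * ν * ε ^ 2 * (1 + L) := by positivity
  -- `|ε² - ν|` is at most the root of the discriminant, so `p > 0` exceeds the smaller root.
  have hb : |ε ^ 2 - ν| ≤ √((ε ^ 2 - ν) ^ 2 + 4 * ν * ε ^ 2 * (1 + L)) :=
    Real.abs_le_sqrt (by linarith)
  have hsq : (2 * p - (ε ^ 2 - ν)) ^ 2 ≤ (ε ^ 2 - ν) ^ 2 + 4 * ν * ε ^ 2 * (1 + L) := by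
    rw [← Real.sq_sqrt (by positivity : 0 ≤ (ε ^ 2 - ν) ^ 2 + 4 * ν * ε ^ 2 * (1 + L))]
    exact sq_le_sq' (by linarith [le_abs_self (ε ^ 2 - ν)]) (by linarith)
  have hlin : p ≤ ε ^ 2 * (L * (ν / (ν + p)) + 1) := by
    have h : ε ^ 2 * (L * (ν / (ν + p)) + 1) = ε ^ 2 * (L * ν + (ν + p)) / (ν + p) := by
      field_simp
    rw [h, le_div_iff₀ (by positivity)]
    nlinarith [hsq]
  have hmain : p * Real.exp (-(L * (ν / (ν + p)))) ≤ ε ^ 2 := by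
    rw [Real.exp_neg, ← div_eq_mul_inv, div_le_iff₀ (Real.exp_pos _)]
    exact hlin.trans (mul_le_mul_of_nonneg_left (Real.add_one_le_exp _) (by positivity))
  exact ⟨hmain, Real.sqrt_le_iff.2 ⟨hε.le, hmain⟩⟩
end

section
/- Let T ≥ 1 be an integer and M > 0 a real number. Let f* ∈ ℝ, and for each t ∈ {1, …, T} let f_t ∈ ℝ, σ_t ∈ [0, 1], and η_t ≥ 0, with η_1 ≤ η_2 ≤ … ≤ η_T. Suppose that for every t ∈ {1, …, T}: f* − f_t ≤ 2√(η_t)·σ_t + 1/t². Set g_T = (1/2)·Σ_{t=1}^T log(1 + 4M σ_t²) and c₀ = 8 / log(1 + 4M). Then f* − max_{1 ≤ t ≤ T} f_t ≤ (1/T)·( √(c₀ · T · η_T · g_T) + π²/6 ). -/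
/-!
The error `f* − max f` is at most every per-step gap, so `T` times it is at most the sum of the
per-step bounds. The terms `1/t²` sum to at most `ζ(2) = π²/6`. For the main terms,
monotonicity of `η` replaces every `η_t` by `η_T`, Cauchy–Schwarz gives
`(∑ 2√η_t σ_t)² ≤ 4 T η_T ∑ σ_t²`, and concavity of the logarithm (`mul_log_le_log_one_add_mul`)
bounds `σ_t²` by `log (1 + 4Mσ_t²) / log (1 + 4M)`.
-/

/-- The chord of the concave function `x ↦ log (1 + x)` over `[0, c]` lies below its graph;
with `x = c * s` this is `x ≤ (c / log (1 + c)) * log (1 + x)`. -/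
lemma mul_log_le_log_one_add_mul {c s : ℝ} (hc : 0 < c) (h0 : 0 ≤ s) (h1 : s ≤ 1) :
    s * Real.log (1 + c) ≤ Real.log (1 + c * s) := by
  have h := strictConcaveOn_log_Ioi.concaveOn.2 (x := 1 + c) (y := 1)
    (Set.mem_Ioi.mpr (by linarith)) (Set.mem_Ioi.mpr one_pos) h0 (sub_nonneg.mpr h1) (by ring)
  simp only [smul_eq_mul, Real.log_one, mul_zero, add_zero] at h
  refine h.trans_eq ?_
  congr 1
  ring

lemma sum_one_div_sq_le (T : ℕ) :
    ∑ t : Fin T, 1 / (((t : ℕ) : ℝ) + 1) ^ 2 ≤ Real.pi ^ 2 / 6 := by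
  rw [Fin.sum_univ_eq_sum_range (fun n : ℕ => 1 / ((n : ℝ) + 1) ^ 2) T]
  have h := sum_le_hasSum (Finset.range (T + 1)) (fun i _ => by positivity) hasSum_zeta_two
  rw [Finset.sum_range_succ'] at h
  -- the additional term at `n = 0` is the junk value `1 / 0 = 0`
  simpa using h

/-- Deterministic aggregation of per-step upper confidence bounds: if for each step `t`
`f* − f_t ≤ 2√(η_t)·σ_t + 1/t²` with nondecreasing `η_t ≥ 0` and `σ_t ∈ [0,1]`, then
`f* − max_t f_t ≤ (1/T)(√(c₀ T η_T g_T) + π²/6)` where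
`g_T = (1/2)Σ_t log(1 + 4Mσ_t²)` and `c₀ = 8/log(1+4M)`. -/
theorem stmt_15 (T : ℕ) (hT : 0 < T) (M : ℝ) (hM : 0 < M) (fstar : ℝ)
    (f σ η : Fin T → ℝ)
    (hσ : ∀ t, σ t ∈ Set.Icc (0 : ℝ) 1) (hη : ∀ t, 0 ≤ η t) (hmono : Monotone η)
    (hstep : ∀ t : Fin T, fstar - f t ≤
      2 * Real.sqrt (η t) * σ t + 1 / (((t : ℕ) : ℝ) + 1) ^ 2) :
    fstar - Finset.univ.sup' (Finset.univ_nonempty_iff.mpr (Fin.pos_iff_nonempty.mp hT)) f ≤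
      (1 / (T : ℝ)) *
        (Real.sqrt ((8 / Real.log (1 + 4 * M)) * T * η ⟨T - 1, by omega⟩ *
            ((1 / 2) * ∑ t, Real.log (1 + 4 * M * (σ t) ^ 2))) +
          Real.pi ^ 2 / 6) := by
  set e := η ⟨T - 1, by omega⟩
  set L := Real.log (1 + 4 * M)
  have hLpos : 0 < L := Real.log_pos (by linarith)
  have hTpos : (0 : ℝ) < T := Nat.cast_pos.mpr hT
  have he0 : 0 ≤ e := hη _
  have hle : ∀ t, η t ≤ e := fun t => hmono (Fin.le_def.mpr (by have := t.2; simp; omega))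
  have hlog : ∀ t, σ t ^ 2 ≤ Real.log (1 + 4 * M * σ t ^ 2) / L := fun t => by
    rw [le_div_iff₀ hLpos]
    exact mul_log_le_log_one_add_mul (by linarith) (sq_nonneg _)
      (pow_le_one₀ (hσ t).1 (hσ t).2)
  have hmain : ∑ t, 2 * Real.sqrt (η t) * σ t ≤
      Real.sqrt (8 / L * T * e * ((1 / 2) * ∑ t, Real.log (1 + 4 * M * (σ t) ^ 2))) := by
    apply Real.le_sqrt_of_sq_le
    calc (∑ t, 2 * Real.sqrt (η t) * σ t) ^ 2
        ≤ T * ∑ t, (2 * Real.sqrt (η t) * σ t) ^ 2 := by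
          simpa using sq_sum_le_card_mul_sum_sq (s := Finset.univ)
            (f := fun t => 2 * Real.sqrt (η t) * σ t)
      _ ≤ T * ∑ t, 4 * e * (Real.log (1 + 4 * M * σ t ^ 2) / L) := by
          gcongr with t
          rw [mul_pow, mul_pow, Real.sq_sqrt (hη t)]
          have h2 := hle t
          have h3 := hlog t
          have h4 := hη t
          calc 2 ^ 2 * η t * σ t ^ 2 = 4 * η t * σ t ^ 2 := by ring
            _ ≤ 4 * e * (Real.log (1 + 4 * M * σ t ^ 2) / L) := by gcongr
      _ = 8 / L * T * e * ((1 / 2) * ∑ t, Real.log (1 + 4 * M * (σ t) ^ 2)) := by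
          rw [← Finset.mul_sum, ← Finset.sum_div]
          ring
  rw [one_div_mul_eq_div, le_div_iff₀' hTpos]
  calc _ = ∑ _t : Fin T, (fstar - Finset.univ.sup'
          (Finset.univ_nonempty_iff.mpr (Fin.pos_iff_nonempty.mp hT)) f) := by
        rw [Finset.sum_const, Finset.card_univ, Fintype.card_fin, nsmul_eq_mul]
    _ ≤ ∑ t : Fin T, (2 * Real.sqrt (η t) * σ t + 1 / (((t : ℕ) : ℝ) + 1) ^ 2) :=
        Finset.sum_le_sum fun t _ =>
          (sub_le_sub_left (Finset.le_sup' f (Finset.mem_univ t)) _).trans (hstep t)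
    _ ≤ _ := by
        rw [Finset.sum_add_distrib]
        exact add_le_add hmain (sum_one_div_sq_le T)
end
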